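/- Let d ≥ 2 and n be integers. In the class of all semi-d-regular trees with boundary with n vertices (trees with boundary in which every interior vertex has degree exactly d and every boundary vertex has degree 1), a tree G has the Faber-Krahn property if and only if it is an SLO*-tree, and G is then uniquely determined up to isomorphism. -/

import Mathlib

/-!
Let `f` be a nonnegative first Dirichlet eigenfunction of a semi-`d`-regular tree `G`, list the
vertices so that `f` is nonincreasing, and root `G` at the first vertex, with parent map `p`. As `f`
vanishes on the boundary and every interior vertex has degree `d`, the Dirichlet form of `f` is
`d * ∑ f v ^ 2 - 2 * ∑ f w * f (p w)`, the last sum running over the vertices other than the root.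
Only this last sum depends on the shape of the tree.

In `G` the vertices numbered `0, …, t` together have at most `1 + (t + 1) * (d - 1)` children,
and the breadth-first tree `bfs d n`, whose vertex `i` has parent `(i - 2) / (d - 1)`, attains this
bound, or exhausts all vertices, for every `t` at once. By a layer-cake decomposition of the
nonincreasing nonnegative sequence of values of `f`, the breadth-first tree therefore maximises the sum
(`rearrange`). Since the interior vertices are exactly those where `f` is positive, hence the first
ones in the list, and since their number is determined by `n` and `d`, the sorted values are
admissible on `bfs d n`; so `dirichletLambda (bfs d n) ≤ dirichletLambda G` (`compare`, `fk_le`).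

If equality holds, the sorted values form a minimiser of the Rayleigh quotient on `bfs d n` too, so
they solve the eigenvalue equation there, and the sums of `f` over corresponding neighbourhoods in
the two trees agree (`neighbor_sum_eq`). This holds for every sorting of `f`, so the order among
vertices with equal values may be changed repeatedly until the parent map of `G` becomes that of
the breadth-first tree (`iso_of_lambda_le`). Hence the Faber-Krahn trees are exactly the trees
isomorphic to `bfs d n` (`fk_iff_iso`).

Finally, listing the vertices in an SLO*-ordering makes the parent map nondecreasing, with the
number of children of each vertex prescribed, which forces it to be that of the breadth-first tree;
conversely the natural order on `bfs d n` is an SLO*-ordering (`iso_of_slo`, `slo_of_iso`).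
-/

/-!
Common definitions for Faber-Krahn type inequalities for trees
(Bıyıkoğlu–Leydold, "Faber-Krahn Type Inequalities for Trees").

A *tree (graph) with boundary* is a finite simple connected graph in which
boundary vertices are exactly the vertices of degree 1 and interior vertices
are the vertices of degree ≥ 2; both sets are required to be nonempty.
The Dirichlet operator is the Laplacian restricted to functions vanishing on
the boundary; `dirichletLambda` is its smallest eigenvalue.
-/

open Finset
open scoped Classical

noncomputable section

namespace FK

variable {V : Type*} [Fintype V] [DecidableEq V]

/-- A vertex is a boundary vertex iff it has degree `1`. -/
def IsBoundary (G : SimpleGraph V) (v : V) : Prop := G.degree v = 1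

/-- A vertex is an interior vertex iff it has degree at least `2`. -/
def IsInterior (G : SimpleGraph V) (v : V) : Prop := 2 ≤ G.degree v

/-- A tree with boundary: a tree with at least one interior and
one boundary vertex. -/
def IsTreeWithBoundary (G : SimpleGraph V) : Prop :=
  G.IsTree ∧ (∃ v, IsInterior G v) ∧ (∃ v, IsBoundary G v)

/-- A connected graph with boundary: every vertex is either a boundary vertex
(degree 1) or an interior vertex (degree ≥ 2), both kinds occur, and no edge
joins two boundary vertices. -/
def IsGraphWithBoundary (G : SimpleGraph V) : Prop :=
  G.Connected ∧ (∀ v, IsBoundary G v ∨ IsInterior G v) ∧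
    (∃ v, IsInterior G v) ∧ (∃ v, IsBoundary G v) ∧
    (∀ v w, G.Adj v w → IsBoundary G v → ¬ IsBoundary G w)

/-- The finset of interior vertices. -/
def interiorFinset (G : SimpleGraph V) : Finset V := univ.filter (fun v => IsInterior G v)

/-- The finset of boundary vertices. -/
def boundaryFinset (G : SimpleGraph V) : Finset V := univ.filter (fun v => IsBoundary G v)

/-- The degree sequence of `G`, as a multiset. -/
def degreeMultiset (G : SimpleGraph V) : Multiset ℕ := Finset.univ.val.map (fun v => G.degree v)

/-- The graph Laplacian `Δ = D - A` applied to a function `f : V → ℝ`. -/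
def lapApply (G : SimpleGraph V) (f : V → ℝ) (v : V) : ℝ :=
  (G.degree v : ℝ) * f v - ∑ w ∈ G.neighborFinset v, f w

/-- `f` (vanishing on the boundary, nonzero) is an eigenfunction of the
Dirichlet operator `Δ₀` with eigenvalue `μ`: the eigenvalue equation holds at
every interior vertex. -/
def IsDirichletEigenpair (G : SimpleGraph V) (μ : ℝ) (f : V → ℝ) : Prop :=
  f ≠ 0 ∧ (∀ v, IsBoundary G v → f v = 0) ∧
    ∀ v, IsInterior G v → lapApply G f v = μ * f v

/-- The first (smallest) Dirichlet eigenvalue `λ(G)`. -/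
def dirichletLambda (G : SimpleGraph V) : ℝ :=
  sInf {μ : ℝ | ∃ f : V → ℝ, IsDirichletEigenpair G μ f}

/-- The quadratic form `⟨Δ f, f⟩ = Σ_{(u,v)∈E} (f u - f v)²` of the Laplacian
(each edge counted once). -/
def quadForm (G : SimpleGraph V) (f : V → ℝ) : ℝ :=
  (∑ v, ∑ w ∈ G.neighborFinset v, (f v - f w) ^ 2) / 2

/-- The Rayleigh quotient `R_G(f)`. -/
def rayleigh (G : SimpleGraph V) (f : V → ℝ) : ℝ :=
  quadForm G f / ∑ v, f v ^ 2

/-- `w` is a child of `v` in the tree `G` rooted at `v₀`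
(heights are distances from the root `v₀`). -/
def IsChild (G : SimpleGraph V) (v₀ v w : V) : Prop :=
  G.Adj v w ∧ G.dist v₀ w = G.dist v₀ v + 1

/-- A spiral-like ordering (SLO-ordering) of the vertices of the tree `G`
rooted at `v₀`: a (strict) well-ordering `lt` satisfying (S1)-(S3). -/
def IsSLOOrdering (G : SimpleGraph V) (v₀ : V) (lt : V → V → Prop) : Prop :=
  IsStrictTotalOrder V lt ∧
  (∀ v w, lt v w → G.dist v₀ v ≤ G.dist v₀ w) ∧
  (∀ v₁ v₂ w₁ w₂, lt v₁ v₂ → IsChild G v₀ v₁ w₁ → IsChild G v₀ v₂ w₂ → lt w₁ w₂) ∧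
  (∀ v w, lt v w → IsBoundary G v → IsBoundary G w)

/-- A spiral-like ordering with increasing degrees (SLO*-ordering):
additionally (S4). -/
def IsSLOStarOrdering (G : SimpleGraph V) (v₀ : V) (lt : V → V → Prop) : Prop :=
  IsSLOOrdering G v₀ lt ∧
  ∀ v w, lt v w → IsInterior G v → IsInterior G w → G.degree v ≤ G.degree w

/-- An SLO-tree: a tree with boundary admitting an SLO-ordering. -/
def IsSLOTree (G : SimpleGraph V) : Prop :=
  IsTreeWithBoundary G ∧ ∃ (v₀ : V) (lt : V → V → Prop), IsSLOOrdering G v₀ lt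

/-- An SLO*-tree: a tree with boundary admitting an SLO*-ordering. -/
def IsSLOStarTree (G : SimpleGraph V) : Prop :=
  IsTreeWithBoundary G ∧ ∃ (v₀ : V) (lt : V → V → Prop), IsSLOStarOrdering G v₀ lt

end FK

namespace FK

/-- Membership in the class of semi-`d`-regular trees with boundary on `n`
vertices: trees with boundary in which every interior vertex has degree
exactly `d` (boundary vertices have degree `1` by definition). -/
def inClassSemiRegular (d : ℕ) {n : ℕ} (G : SimpleGraph (Fin n)) : Prop :=
  IsTreeWithBoundary G ∧ ∀ v, IsInterior G v → G.degree v = d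

/-- The Faber-Krahn property in the class of semi-`d`-regular trees with
boundary on `n` vertices. -/
def hasFKSemiRegular (d : ℕ) {n : ℕ} (G : SimpleGraph (Fin n)) : Prop :=
  inClassSemiRegular d G ∧ ∀ G' : SimpleGraph (Fin n), inClassSemiRegular d G' →
    dirichletLambda G ≤ dirichletLambda G'

set_option linter.unusedSectionVars false

/-! ### Rooted trees given by a parent function -/

/-- `G` is the tree with root `r` whose edges are the pairs `{v, p v}` with `v ≠ r`. The height-like
function `h` certifies that following parents terminates. The value `p r` is irrelevant. -/
structure Rooted {V : Type*} (G : SimpleGraph V) (r : V) (p : V → V) (h : V → ℕ) : Prop where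
  adj : ∀ u v, G.Adj u v ↔ (u ≠ r ∧ p u = v) ∨ (v ≠ r ∧ p v = u)
  lt : ∀ v, v ≠ r → h (p v) < h v

section Rooted

variable {V : Type*} [Fintype V] [DecidableEq V] {G : SimpleGraph V} {r : V} {p : V → V}
  {h : V → ℕ}

lemma Rooted.neighborFinset (H : Rooted G r p h) (v : V) :
    G.neighborFinset v = (univ.filter fun w => w ≠ r ∧ p w = v) ∪ (if v = r then ∅ else {p v}) := by
  ext w
  rw [SimpleGraph.mem_neighborFinset, H.adj]
  by_cases hv : v = r
  · simp [hv]
  · simp only [ne_eq, hv, not_false_eq_true, true_and, if_false, mem_union, mem_filter, mem_univ,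
      mem_singleton]
    tauto

lemma Rooted.sum_neighbor {M : Type*} [AddCommMonoid M] (H : Rooted G r p h) (g : V → M) (v : V) :
    ∑ w ∈ G.neighborFinset v, g w =
      (∑ w ∈ univ.filter (fun w => w ≠ r ∧ p w = v), g w) + if v = r then 0 else g (p v) := by
  rw [H.neighborFinset, Finset.sum_union]
  · split_ifs <;> simp
  · split_ifs with hv
    · simp
    · rw [Finset.disjoint_singleton_right]
      simp only [mem_filter, mem_univ, true_and, not_and]
      intro h1 h2
      have a1 := H.lt _ hv
      have a2 := H.lt _ h1
      rw [h2] at a2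
      omega

lemma Rooted.degree (H : Rooted G r p h) (v : V) :
    G.degree v = (univ.filter fun w => w ≠ r ∧ p w = v).card + if v = r then 0 else 1 := by
  have := H.sum_neighbor (fun _ => (1 : ℕ)) v
  simpa using this

lemma Rooted.sum_sum {M : Type*} [CommSemiring M] (H : Rooted G r p h) (f g : V → M) :
    ∑ v, f v * ∑ w ∈ G.neighborFinset v, g w =
      (∑ w ∈ univ.filter (· ≠ r), f (p w) * g w) + ∑ w ∈ univ.filter (· ≠ r), f w * g (p w) := by
  simp_rw [H.sum_neighbor, mul_add, Finset.sum_add_distrib]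
  congr 1
  · rw [← Finset.sum_fiberwise_of_maps_to (s := univ.filter (· ≠ r)) (t := univ) (g := p)
      (by simp)]
    refine Finset.sum_congr rfl fun v _ => ?_
    rw [Finset.mul_sum, Finset.filter_filter]
    refine Finset.sum_congr rfl fun w hw => ?_
    rw [(mem_filter.1 hw).2.2]
  · rw [Finset.sum_filter]
    refine Finset.sum_congr rfl fun v _ => ?_
    by_cases hv : v = r <;> simp [hv]

lemma Rooted.sum_degree (H : Rooted G r p h) : ∑ v, G.degree v = 2 * (Fintype.card V - 1) := by
  have := H.sum_sum (fun _ => (1 : ℕ)) (fun _ => 1)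
  simp only [sum_const, smul_eq_mul, mul_one, one_mul, SimpleGraph.card_neighborFinset_eq_degree]
    at this
  rw [this, Finset.filter_ne', Finset.card_erase_of_mem (mem_univ _), Finset.card_univ]
  ring

lemma Rooted.connected (H : Rooted G r p h) : G.Connected := by
  have key : ∀ m v, h v ≤ m → G.Reachable r v := by
    intro m
    induction m with
    | zero =>
      intro v hv
      by_cases hr : v = r
      · rw [hr]
      · have := H.lt v hr
        omega
    | succ m ih =>
      intro v hv
      by_cases hr : v = r
      · rw [hr]
      · have := H.lt v hr
        exact (ih (p v) (by omega)).trans ((H.adj _ _).2 (Or.inr ⟨hr, rfl⟩)).reachable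
  have : Nonempty V := ⟨r⟩
  exact ⟨fun u v => (key _ u le_rfl).symm.trans (key _ v le_rfl)⟩

lemma Rooted.isTree (H : Rooted G r p h) : G.IsTree := by
  rw [SimpleGraph.isTree_iff_connected_and_card]
  refine ⟨H.connected, ?_⟩
  have h1 := H.sum_degree
  rw [SimpleGraph.sum_degrees_eq_twice_card_edges] at h1
  have h2 : 0 < Fintype.card V := Fintype.card_pos_iff.2 ⟨r⟩
  rw [Nat.card_eq_fintype_card, Nat.card_eq_fintype_card, ← SimpleGraph.edgeFinset_card]
  omega

lemma exists_pred (hG : G.Connected) (r v : V) (hv : v ≠ r) :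
    ∃ u, G.Adj u v ∧ G.dist r v = G.dist r u + 1 := by
  obtain ⟨w, hw⟩ := hG.exists_walk_length_eq_dist v r
  cases w with
  | nil => exact absurd rfl hv
  | @cons _ u _ ha q =>
    refine ⟨u, ha.symm, ?_⟩
    have h1 := SimpleGraph.dist_le q
    have h2 := hG.dist_triangle (u := r) (v := u) (w := v)
    have h3 := SimpleGraph.dist_eq_one_iff_adj.2 ha.symm
    rw [SimpleGraph.Walk.length_cons] at hw
    rw [SimpleGraph.dist_comm] at hw h1
    omega

lemma Rooted.dist (H : Rooted G r p h) : ∀ v, v ≠ r → G.dist r v = G.dist r (p v) + 1 := by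
  have key : ∀ m v, G.dist r v ≤ m → v ≠ r → G.dist r v = G.dist r (p v) + 1 := by
    intro m
    induction m with
    | zero =>
      intro v hm hv
      exact absurd (H.connected.dist_eq_zero_iff.1 (by omega)).symm hv
    | succ m ih =>
      intro v hm hv
      obtain ⟨u, hu, hd⟩ := exists_pred H.connected r v hv
      rcases (H.adj _ _).1 hu with ⟨h1, h2⟩ | ⟨h1, h2⟩
      · have := ih u (by omega) h1
        rw [h2] at this
        omega
      · rw [h2, hd]
  exact fun v => key _ v le_rfl

lemma Rooted.isChild_iff (H : Rooted G r p h) (v w : V) : IsChild G r v w ↔ w ≠ r ∧ p w = v := by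
  unfold IsChild
  rw [H.adj]
  constructor
  · rintro ⟨⟨h1, h2⟩ | h1, h3⟩
    · have := H.dist v h1
      rw [h2] at this
      omega
    · exact h1
  · rintro ⟨h1, h2⟩
    refine ⟨Or.inr ⟨h1, h2⟩, ?_⟩
    rw [← h2]
    exact H.dist w h1

/-- Every tree can be rooted anywhere. The edges `{v, p v}` exhaust the edge set because there are
`|V| - 1` of them. -/
lemma exists_rooted (hG : G.IsTree) (r : V) : ∃ p, Rooted G r p (G.dist r) := by
  have hp : ∀ v, ∃ u, v ≠ r → G.Adj u v ∧ G.dist r v = G.dist r u + 1 := by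
    intro v
    by_cases hv : v = r
    · exact ⟨r, fun h => absurd hv h⟩
    · obtain ⟨u, hu⟩ := exists_pred hG.connected r v hv
      exact ⟨u, fun _ => hu⟩
  choose p hp using hp
  refine ⟨p, ?_, fun v hv => by have := (hp v hv).2; omega⟩
  have hinj : Set.InjOn (fun v => s(v, p v)) (univ.filter (· ≠ r) : Finset V) := by
    intro v hv w hw hvw
    simp only [coe_filter, mem_univ, true_and, Set.mem_ofPred_eq] at hv hw
    simp only [Sym2.eq_iff] at hvw
    rcases hvw with h | ⟨h1, h2⟩
    · exact h.1
    · have a1 := (hp v hv).2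
      have a2 := (hp w hw).2
      rw [h2] at a1
      rw [← h1] at a2
      omega
  have hsub : (univ.filter (· ≠ r)).image (fun v => s(v, p v)) ⊆ G.edgeFinset := by
    intro e he
    obtain ⟨v, hv, rfl⟩ := mem_image.1 he
    simp only [SimpleGraph.mem_edgeFinset, SimpleGraph.mem_edgeSet]
    exact (hp v (mem_filter.1 hv).2).1.symm
  have heq : (univ.filter (· ≠ r)).image (fun v => s(v, p v)) = G.edgeFinset := by
    refine Finset.eq_of_subset_of_card_le hsub ?_
    rw [Finset.card_image_of_injOn hinj, Finset.filter_ne', Finset.card_erase_of_mem (mem_univ _),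
      Finset.card_univ]
    have := hG.card_edgeFinset
    omega
  intro u v
  constructor
  · intro ha
    have : s(u, v) ∈ (univ.filter (· ≠ r)).image (fun v => s(v, p v)) := by
      rw [heq]
      simpa using ha
    obtain ⟨w, hw, he⟩ := mem_image.1 this
    have hw := (mem_filter.1 hw).2
    rcases Sym2.eq_iff.1 he with ⟨h1, h2⟩ | ⟨h1, h2⟩
    · subst h1
      exact Or.inl ⟨hw, h2⟩
    · subst h1
      exact Or.inr ⟨hw, h2⟩
  · rintro (⟨h1, h2⟩ | ⟨h1, h2⟩)
    · rw [← h2]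
      exact (hp u h1).1.symm
    · rw [← h2]
      exact (hp v h1).1

end Rooted

/-! ### Variational characterisation of the first Dirichlet eigenvalue -/

section Spectral

variable {V : Type*} [Fintype V] [DecidableEq V] (G : SimpleGraph V)

/-- The quadratic form `⟨Δ f, f⟩`. -/
def qf (f : V → ℝ) : ℝ := ∑ v, f v * lapApply G f v

/-- Functions vanishing on the boundary. -/
def IsDirichlet (f : V → ℝ) : Prop := ∀ v, IsBoundary G v → f v = 0

lemma sum_neighbor_eq (f : V → ℝ) (v : V) :
    ∑ w ∈ G.neighborFinset v, f w = ∑ w, if G.Adj v w then f w else 0 := by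
  rw [← Finset.sum_filter]
  refine Finset.sum_congr ?_ fun _ _ => rfl
  ext w
  simp

lemma lapApply_add_smul (f g : V → ℝ) (t : ℝ) (v : V) :
    lapApply G (fun w => f w + t * g w) v = lapApply G f v + t * lapApply G g v := by
  simp only [lapApply, Finset.sum_add_distrib, ← Finset.mul_sum]
  ring

lemma lapApply_symm (f g : V → ℝ) : ∑ v, f v * lapApply G g v = ∑ v, g v * lapApply G f v := by
  simp only [lapApply, sum_neighbor_eq, mul_sub, Finset.sum_sub_distrib, Finset.mul_sum]
  congr 1
  · exact Finset.sum_congr rfl fun v _ => by ring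
  · rw [Finset.sum_comm]
    refine Finset.sum_congr rfl fun v _ => Finset.sum_congr rfl fun w _ => ?_
    rw [G.adj_comm]
    split_ifs <;> ring

lemma qf_add_smul (f g : V → ℝ) (t : ℝ) :
    qf G (fun w => f w + t * g w) =
      qf G f + 2 * t * (∑ v, g v * lapApply G f v) + t ^ 2 * qf G g := by
  have h := lapApply_symm G f g
  calc qf G (fun w => f w + t * g w)
      = qf G f + t * (∑ v, f v * lapApply G g v) + t * (∑ v, g v * lapApply G f v)
          + t ^ 2 * qf G g := by
        simp only [qf, lapApply_add_smul, Finset.mul_sum, ← Finset.sum_add_distrib]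
        exact Finset.sum_congr rfl fun v _ => by ring
    _ = _ := by rw [h]; ring

lemma qf_smul (g : V → ℝ) (t : ℝ) : qf G (fun w => t * g w) = t ^ 2 * qf G g := by
  have := qf_add_smul G (fun _ => 0) g t
  simpa [qf, lapApply] using this

lemma qf_abs_le (f : V → ℝ) : qf G (fun v => |f v|) ≤ qf G f := by
  refine Finset.sum_le_sum fun v _ => ?_
  simp only [lapApply, mul_sub]
  have h1 : |f v| * ((G.degree v : ℝ) * |f v|) = f v * (G.degree v * f v) := by
    have := abs_mul_abs_self (f v)
    linear_combination (G.degree v : ℝ) * this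
  have h2 : f v * ∑ w ∈ G.neighborFinset v, f w ≤ |f v| * ∑ w ∈ G.neighborFinset v, |f w| := by
    rw [Finset.mul_sum, Finset.mul_sum]
    refine Finset.sum_le_sum fun w _ => ?_
    rw [← abs_mul]
    exact le_abs_self _
  linarith

/-- The first Dirichlet eigenvalue is the minimum of the Rayleigh quotient, it has a nonnegative
eigenfunction, and every Dirichlet function attaining the minimum solves the eigenvalue equation. -/
lemma spectral (hbi : ∀ v, IsBoundary G v ∨ IsInterior G v) (hInt : ∃ v, IsInterior G v) :
    (∃ f, IsDirichletEigenpair G (dirichletLambda G) f ∧ ∀ v, 0 ≤ f v) ∧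
    (∀ g, IsDirichlet G g → dirichletLambda G * ∑ v, g v ^ 2 ≤ qf G g) ∧
    (∀ g, IsDirichlet G g → qf G g = dirichletLambda G * ∑ v, g v ^ 2 →
      ∀ v, IsInterior G v → lapApply G g v = dirichletLambda G * g v) := by
  have hnb : ∀ v, IsInterior G v → ¬ IsBoundary G v := by
    intro v h1 h2
    unfold IsInterior at h1
    unfold IsBoundary at h2
    omega
  let S : Set (V → ℝ) := {f | IsDirichlet G f ∧ ∑ v, f v ^ 2 = 1}
  have hScl : IsClosed S := by
    have h1 : IsClosed {f : V → ℝ | IsDirichlet G f} := by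
      simp only [IsDirichlet, Set.ofPred_forall]
      exact isClosed_iInter fun v => isClosed_iInter fun _ =>
        isClosed_eq (continuous_apply v) continuous_const
    exact h1.inter (isClosed_eq (by fun_prop) continuous_const)
  have hScpt : IsCompact S := by
    refine IsCompact.of_isClosed_subset (isCompact_univ_pi (s := fun _ : V => Set.Icc (-1 : ℝ) 1)
      fun _ => isCompact_Icc) hScl ?_
    intro f hf v _
    have h1 : f v ^ 2 ≤ ∑ v, f v ^ 2 :=
      Finset.single_le_sum (f := fun v => f v ^ 2) (fun _ _ => sq_nonneg _) (mem_univ v)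
    rw [hf.2] at h1
    exact abs_le.1 (abs_le_of_sq_le_sq (by simpa using h1) zero_le_one)
  have hSne : S.Nonempty := by
    obtain ⟨v, hv⟩ := hInt
    refine ⟨Pi.single v 1, ?_, ?_⟩
    · intro w hw
      refine Pi.single_eq_of_ne ?_ _
      rintro rfl
      exact hnb _ hv hw
    · rw [Finset.sum_eq_single v]
      · simp
      · intro w _ hw
        simp [Pi.single_eq_of_ne hw]
      · simp
  have hcont : Continuous (qf G) := by
    unfold qf lapApply
    fun_prop
  obtain ⟨f, hfS, hfmin⟩ := hScpt.exists_isMinOn hSne hcont.continuousOn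
  set m := qf G f with hm
  have hlow : ∀ g, IsDirichlet G g → m * ∑ v, g v ^ 2 ≤ qf G g := by
    intro g hg
    by_cases h0 : ∑ v, g v ^ 2 = 0
    · have hg0 : ∀ v, g v = 0 := fun v => by
        have := (Finset.sum_eq_zero_iff_of_nonneg fun v _ => sq_nonneg (g v)).1 h0 v (mem_univ v)
        simpa using this
      rw [h0]
      simp [qf, hg0]
    · have hpos : 0 < ∑ v, g v ^ 2 :=
        lt_of_le_of_ne (Finset.sum_nonneg fun v _ => sq_nonneg (g v)) (Ne.symm h0)
      set s := ∑ v, g v ^ 2 with hs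
      have hsq : (1 / Real.sqrt s) ^ 2 = 1 / s := by
        rw [div_pow, Real.sq_sqrt hpos.le, one_pow]
      have hmem : (fun w => 1 / Real.sqrt s * g w) ∈ S := by
        refine ⟨fun v hv => by simp [hg v hv], ?_⟩
        simp only [mul_pow, ← Finset.mul_sum, hsq]
        rw [← hs]
        field_simp
      have := hfmin hmem
      simp only [Set.mem_ofPred_eq] at this
      rw [qf_smul, hsq] at this
      rw [← hm] at this
      calc m * s ≤ (1 / s * qf G g) * s := by gcongr
        _ = qf G g := by field_simp
  have hext : ∀ g, IsDirichlet G g → qf G g = m * ∑ v, g v ^ 2 →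
      ∀ v, IsInterior G v → lapApply G g v = m * g v := by
    intro g hg hgm v hv
    let e : V → ℝ := Pi.single v 1
    have he : ∀ φ : V → ℝ, ∑ w, e w * φ w = φ v := by
      intro φ
      rw [Finset.sum_eq_single v]
      · simp [e]
      · intro w _ hw
        simp [e, Pi.single_eq_of_ne hw]
      · simp
    have hquad : ∀ t : ℝ, 0 ≤ 2 * t * (lapApply G g v - m * g v) + t ^ 2 * (qf G e - m) := by
      intro t
      have h1 := hlow (fun w => g w + t * e w) (by
        intro w hw
        have : w ≠ v := by
          rintro rfl
          exact hnb _ hv hw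
        simp [hg w hw, e, Pi.single_eq_of_ne this])
      rw [qf_add_smul, he] at h1
      have h2 : ∑ w, (g w + t * e w) ^ 2 = (∑ w, g w ^ 2) + 2 * t * g v + t ^ 2 := by
        calc ∑ w, (g w + t * e w) ^ 2
            = (∑ w, g w ^ 2) + 2 * t * (∑ w, e w * g w) + t ^ 2 * (∑ w, e w * e w) := by
              simp only [Finset.mul_sum, ← Finset.sum_add_distrib]
              exact Finset.sum_congr rfl fun v _ => by ring
          _ = _ := by rw [he, he]; simp [e]
      rw [h2] at h1
      linarith
    set X := lapApply G g v - m * g v with hX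
    set Y := qf G e - m with hY
    have hc : 0 < |Y| + 1 := by positivity
    have h3 := hquad (-X / (|Y| + 1))
    have h4 : 2 * (-X / (|Y| + 1)) * X + (-X / (|Y| + 1)) ^ 2 * Y
        = X ^ 2 * (Y - 2 * (|Y| + 1)) / (|Y| + 1) ^ 2 := by
      field_simp
      ring
    rw [h4] at h3
    have h5 : Y - 2 * (|Y| + 1) < 0 := by
      have := le_abs_self Y
      have := abs_nonneg Y
      linarith
    have h6 : 0 ≤ X ^ 2 * (Y - 2 * (|Y| + 1)) := by
      have h7 : 0 < (|Y| + 1) ^ 2 := by positivity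
      by_contra hneg
      push Not at hneg
      exact absurd h3 (not_le.2 (div_neg_of_neg_of_pos hneg h7))
    have h8 : X ^ 2 = 0 := by nlinarith [sq_nonneg X]
    have : X = 0 := by simpa using h8
    linarith
  have hDabs : IsDirichlet G (fun v => |f v|) := fun v hv => by simp [hfS.1 v hv]
  have hsumabs : ∑ v, |f v| ^ 2 = 1 := by simpa using hfS.2
  have habs : qf G (fun v => |f v|) = m * ∑ v, |f v| ^ 2 := by
    refine le_antisymm ?_ (hlow _ hDabs)
    rw [hsumabs, mul_one]
    exact qf_abs_le G f
  have hpair : IsDirichletEigenpair G m (fun v => |f v|) := by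
    refine ⟨?_, hDabs, hext _ hDabs habs⟩
    intro h0
    have : ∑ v, |f v| ^ 2 = 0 := by
      refine Finset.sum_eq_zero fun v _ => ?_
      have := congrFun h0 v
      simp only [Pi.zero_apply] at this
      rw [this]
      simp
    rw [hsumabs] at this
    exact one_ne_zero this
  have hlam : dirichletLambda G = m := by
    refine IsLeast.csInf_eq ⟨⟨_, hpair⟩, ?_⟩
    rintro μ ⟨g, hg0, hgD, hge⟩
    have h1 : qf G g = μ * ∑ v, g v ^ 2 := by
      rw [qf, Finset.mul_sum]
      refine Finset.sum_congr rfl fun v _ => ?_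
      rcases hbi v with hv | hv
      · simp [hgD v hv]
      · rw [hge v hv]
        ring
    have h2 := hlow g hgD
    rw [h1] at h2
    have hpos : 0 < ∑ v, g v ^ 2 := by
      obtain ⟨v, hv⟩ := Function.ne_iff.1 hg0
      refine Finset.sum_pos' (fun v _ => sq_nonneg _) ⟨v, mem_univ v, ?_⟩
      have : g v ≠ 0 := hv
      positivity
    exact le_of_mul_le_mul_right h2 hpos
  rw [hlam]
  exact ⟨⟨_, hpair, fun v => abs_nonneg _⟩, hlow, hext⟩

/-- A nonnegative eigenfunction is positive at interior vertices: a zero there spreads to all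
neighbours, hence to the whole graph, boundary vertices having no neighbour besides the one the zero
came from. -/
lemma eigen_pos (hG : G.Connected) (hbi : ∀ v, IsBoundary G v ∨ IsInterior G v) {μ : ℝ} {f : V → ℝ}
    (hf : IsDirichletEigenpair G μ f) (h0 : ∀ v, 0 ≤ f v) (v : V) (hv : IsInterior G v) :
    0 < f v := by
  by_contra hneg
  have hz : ∀ v, IsInterior G v → f v = 0 → ∀ w, G.Adj v w → f w = 0 := by
    intro v hv hfv w hw
    have h1 := hf.2.2 v hv
    rw [lapApply, hfv] at h1
    have h2 : ∑ w ∈ G.neighborFinset v, f w = 0 := by linarith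
    exact (Finset.sum_eq_zero_iff_of_nonneg fun w _ => h0 w).1 h2 w (by simpa using hw)
  have hfv : f v = 0 := le_antisymm (not_lt.1 hneg) (h0 v)
  have hstep : ∀ x y, G.Adj x y → (f x = 0 ∧ ∀ w, G.Adj x w → f w = 0) →
      (f y = 0 ∧ ∀ w, G.Adj y w → f w = 0) := by
    rintro x y hxy ⟨h1, h2⟩
    refine ⟨h2 y hxy, fun w hw => ?_⟩
    rcases hbi y with hy | hy
    · obtain ⟨z, hz⟩ := Finset.card_eq_one.1 (show (G.neighborFinset y).card = 1 from hy)
      have hwz : w ∈ G.neighborFinset y := by simpa using hw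
      have hxz : x ∈ G.neighborFinset y := by simpa using hxy.symm
      rw [hz, mem_singleton] at hwz hxz
      rw [hwz, ← hxz, h1]
    · exact hz y hy (h2 y hxy) w hw
  have hall : ∀ w, f w = 0 := by
    intro w
    obtain ⟨q⟩ := hG v w
    have hwalk : ∀ {x y : V} (q : G.Walk x y), (f x = 0 ∧ ∀ w, G.Adj x w → f w = 0) →
        (f y = 0 ∧ ∀ w, G.Adj y w → f w = 0) := by
      intro x y q
      induction q with
      | nil => exact id
      | cons hadj _ ih => exact fun h => ih (hstep _ _ hadj h)
    exact (hwalk q ⟨hfv, hz v hv hfv⟩).1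
  exact hf.1 (funext hall)

end Spectral

/-! ### The breadth-first tree -/

/-- The parent of the vertex `i ≥ 1` when the vertices `0, 1, 2, …` are filled in breadth-first
order, the root `0` receiving `d` children and every later vertex `d - 1`. Truncated subtraction
gives the correct value `0` at `i = 1`. -/
def par (d i : ℕ) : ℕ := (i - 2) / (d - 1)

lemma par_le (d i : ℕ) : par d i ≤ i := (Nat.div_le_self _ _).trans (Nat.sub_le _ _)

lemma par_lt (d : ℕ) {i : ℕ} (hi : i ≠ 0) : par d i < i := by
  have : par d i ≤ i - 2 := Nat.div_le_self _ _
  omega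

lemma par_mono (d : ℕ) {i j : ℕ} (hij : i ≤ j) : par d i ≤ par d j :=
  Nat.div_le_div_right (Nat.sub_le_sub_right hij 2)

lemma par_le_iff {d : ℕ} (hd : 2 ≤ d) (i t : ℕ) : par d i ≤ t ↔ i ≤ 1 + (t + 1) * (d - 1) := by
  have h1 : 0 < (t + 1) * (d - 1) := Nat.mul_pos (by omega) (by omega)
  rw [← Nat.lt_succ_iff, par, Nat.div_lt_iff_lt_mul (by omega)]
  simp only [Nat.succ_eq_add_one]
  omega

section BreadthFirst

variable {n : ℕ} [NeZero n]

/-- `par` on `Fin n`. -/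
def parF (d : ℕ) (i : Fin n) : Fin n := ⟨par d i, (par_le d i).trans_lt i.2⟩

/-- The tree on `Fin n` with root `0` in which the parent of `i ≠ 0` is `parF d i`. -/
def bfs (d n : ℕ) [NeZero n] : SimpleGraph (Fin n) where
  Adj u v := (u ≠ 0 ∧ parF d u = v) ∨ (v ≠ 0 ∧ parF d v = u)
  symm := ⟨fun _ _ h => h.symm⟩
  loopless := ⟨by
    intro v h
    have h' : v ≠ 0 ∧ parF d v = v := by tauto
    have h1 := par_lt d (Fin.val_ne_zero_iff.2 h'.1)
    have h2 : par d v = v := congrArg Fin.val h'.2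
    omega⟩

lemma bfs_rooted (d : ℕ) : Rooted (bfs d n) 0 (parF d) Fin.val :=
  ⟨fun _ _ => Iff.rfl, fun _ hv => par_lt d (Fin.val_ne_zero_iff.2 hv)⟩

lemma card_fin_Ioc (a b : ℕ) (hb : b < n) :
    (univ.filter fun i : Fin n => a < i.val ∧ i.val ≤ b).card = b - a := by
  rw [← Nat.card_Ioc, ← Finset.card_map Fin.valEmbedding]
  congr 1
  ext x
  simp only [mem_map, mem_filter, mem_univ, true_and, Fin.valEmbedding_apply, mem_Ioc]
  constructor
  · rintro ⟨i, hi, rfl⟩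
    exact hi
  · intro hx
    exact ⟨⟨x, by omega⟩, hx, rfl⟩

lemma par_lt_of_card {d k : ℕ} (hd : 2 ≤ d) (hk : 1 ≤ k) (hn : n = k * (d - 1) + 2) (i : Fin n) :
    par d i < k := by
  have h1 := (par_le_iff hd i (k - 1)).2 (by
    rw [Nat.sub_add_cancel hk]
    have := i.2
    omega)
  omega

lemma bfs_degree {d k : ℕ} (hd : 2 ≤ d) (hk : 1 ≤ k) (hn : n = k * (d - 1) + 2) (i : Fin n) :
    (bfs d n).degree i = if i.val < k then d else 1 := by
  rw [(bfs_rooted d).degree]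
  have hz : ∀ w : Fin n, w ≠ 0 ↔ 0 < w.val := fun w => by
    rw [Nat.pos_iff_ne_zero, Fin.val_ne_zero_iff]
  have hval : ∀ w : Fin n, parF d w = i ↔ par d w = i.val := fun w => Fin.ext_iff
  by_cases h1 : i.val < k <;> by_cases h2 : i = 0
  · rw [if_pos h1, if_pos h2]
    rw [show (univ.filter fun w : Fin n => w ≠ 0 ∧ parF d w = i) =
      univ.filter fun w : Fin n => 0 < w.val ∧ w.val ≤ d from ?_, card_fin_Ioc]
    · simp
    · have := Nat.mul_le_mul_right (d - 1) hk
      omega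
    · refine Finset.filter_congr fun w _ => ?_
      rw [hz, hval, h2]
      have := par_le_iff hd w 0
      simp only [Fin.val_zero]
      omega
  · rw [if_pos h1, if_neg h2]
    rw [show (univ.filter fun w : Fin n => w ≠ 0 ∧ parF d w = i) =
      univ.filter fun w : Fin n => 1 + i.val * (d - 1) < w.val ∧
        w.val ≤ 1 + (i.val + 1) * (d - 1) from ?_, card_fin_Ioc]
    · rw [add_mul]
      omega
    · have := Nat.mul_le_mul_right (d - 1) (Nat.succ_le_of_lt h1)
      rw [Nat.succ_eq_add_one] at this
      omega
    · refine Finset.filter_congr fun w _ => ?_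
      have hi : 0 < i.val := (hz i).1 h2
      rw [hz, hval]
      have a1 := par_le_iff hd w i.val
      have a2 := par_le_iff hd w (i.val - 1)
      rw [Nat.sub_add_cancel hi] at a2
      omega
  · rw [h2] at h1
    simp only [Fin.val_zero] at h1
    omega
  · rw [if_neg h1, if_neg h2, Finset.card_eq_zero.2]
    rw [Finset.filter_eq_empty_iff]
    rintro w _ ⟨_, hw⟩
    rw [hval] at hw
    have := par_lt_of_card hd hk hn w
    omega

lemma bfs_interior {d k : ℕ} (hd : 2 ≤ d) (hk : 1 ≤ k) (hn : n = k * (d - 1) + 2) (i : Fin n) :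
    IsInterior (bfs d n) i ↔ i.val < k := by
  rw [IsInterior, bfs_degree hd hk hn]
  split_ifs with h <;> simp [h, hd]

lemma lt_of_card {d k : ℕ} (hd : 2 ≤ d) (hn : n = k * (d - 1) + 2) : k < n := by
  have := Nat.le_mul_of_pos_right k (show 0 < d - 1 by omega)
  omega

lemma bfs_inClass {d k : ℕ} (hd : 2 ≤ d) (hk : 1 ≤ k) (hn : n = k * (d - 1) + 2) :
    inClassSemiRegular d (bfs d n) := by
  refine ⟨⟨(bfs_rooted d).isTree, ⟨0, ?_⟩, ⟨⟨k, lt_of_card hd hn⟩, ?_⟩⟩, ?_⟩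
  · rw [bfs_interior hd hk hn]
    simpa using Nat.succ_le_iff.1 hk
  · rw [IsBoundary, bfs_degree hd hk hn]
    simp
  · intro v hv
    rw [bfs_interior hd hk hn] at hv
    rw [bfs_degree hd hk hn, if_pos hv]

/-! ### Semi-regular trees -/

lemma class_bi {d : ℕ} {G : SimpleGraph (Fin n)} (hG : inClassSemiRegular d G) (v : Fin n) :
    IsBoundary G v ∨ IsInterior G v := by
  obtain ⟨⟨hT, ⟨u, hu⟩, _⟩, _⟩ := hG
  have hpos : 0 < G.degree u := lt_of_lt_of_le (by norm_num) hu
  obtain ⟨w, hw⟩ := (G.degree_pos_iff_exists_adj u).1 hpos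
  have : Nontrivial (Fin n) := ⟨u, w, hw.ne⟩
  have := hT.connected.preconnected.degree_pos_of_nontrivial v
  unfold IsBoundary IsInterior
  omega

lemma class_card {d : ℕ} (hd : 2 ≤ d) {G : SimpleGraph (Fin n)} (hG : inClassSemiRegular d G) :
    1 ≤ (interiorFinset G).card ∧ n = (interiorFinset G).card * (d - 1) + 2 := by
  have hbi := class_bi hG
  obtain ⟨⟨hT, ⟨u, hu⟩, _⟩, hdeg⟩ := hG
  have hk : 1 ≤ (interiorFinset G).card :=
    Finset.card_pos.2 ⟨u, by simpa [interiorFinset] using hu⟩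
  refine ⟨hk, ?_⟩
  obtain ⟨p, hp⟩ := exists_rooted hT 0
  have h1 := hp.sum_degree
  have h2 : ∑ v, G.degree v = ∑ v, (1 + if IsInterior G v then d - 1 else 0) := by
    refine Finset.sum_congr rfl fun v _ => ?_
    split_ifs with hv
    · rw [hdeg v hv]
      omega
    · rcases hbi v with h | h
      · exact h
      · exact absurd h hv
  rw [h2, Finset.sum_add_distrib, ← Finset.sum_filter] at h1
  simp only [sum_const, card_univ, Fintype.card_fin, smul_eq_mul, mul_one] at h1
  change n + (interiorFinset G).card * (d - 1) = _ at h1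
  have := NeZero.pos n
  have h3 : 0 < (interiorFinset G).card * (d - 1) := Nat.mul_pos hk (by omega)
  omega

lemma class_qf {d : ℕ} {G : SimpleGraph (Fin n)} (hG : inClassSemiRegular d G) {r : Fin n}
    {p : Fin n → Fin n} {h : Fin n → ℕ} (H : Rooted G r p h) (g : Fin n → ℝ)
    (hg : IsDirichlet G g) :
    qf G g = d * (∑ v, g v ^ 2) - 2 * ∑ w ∈ univ.filter (· ≠ r), g w * g (p w) := by
  have h1 := H.sum_sum g g
  have h2 : ∑ w ∈ univ.filter (· ≠ r), g (p w) * g w = ∑ w ∈ univ.filter (· ≠ r), g w * g (p w) :=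
    Finset.sum_congr rfl fun w _ => mul_comm _ _
  simp only [qf, lapApply, mul_sub, Finset.sum_sub_distrib]
  rw [h1, h2, Finset.mul_sum, two_mul]
  congr 1
  refine Finset.sum_congr rfl fun v _ => ?_
  rcases class_bi hG v with hv | hv
  · simp [hg v hv]
  · rw [hG.2 v hv]
    ring

/-! ### The rearrangement inequality -/

/-- Layer-cake decomposition of a nonincreasing nonnegative sequence. -/
lemma layer_cake (a : Fin n → ℝ) (ha : Antitone a) (h0 : ∀ i, 0 ≤ a i) :
    ∃ c : Fin n → ℝ, (∀ s, 0 ≤ c s) ∧ ∀ i, a i = ∑ s, if i ≤ s then c s else 0 := by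
  let A : ℕ → ℝ := fun i => if h : i < n then a ⟨i, h⟩ else 0
  have hA : ∀ i : Fin n, A i = a i := fun i => by simp [A]
  refine ⟨fun s => A s - A (s + 1), fun s => ?_, fun i => ?_⟩
  · change 0 ≤ A s - A (s + 1)
    rw [hA]
    by_cases h : s.val + 1 < n
    · simp only [A, h, dif_pos, sub_nonneg]
      exact ha (Fin.le_def.2 (Nat.le_succ _))
    · simp [A, h, h0]
  · have tel : ∀ m, i.val ≤ m →
        ∑ s ∈ Finset.range m, (if i.val ≤ s then A s - A (s + 1) else 0) = A i - A m := by
      intro m hm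
      induction m, hm using Nat.le_induction with
      | base =>
        rw [sub_self]
        refine Finset.sum_eq_zero fun s hs => if_neg ?_
        have := Finset.mem_range.1 hs
        omega
      | succ m hm ih =>
        rw [Finset.sum_range_succ, ih, if_pos hm]
        ring
    have h1 := tel n i.2.le
    rw [← Fin.sum_univ_eq_sum_range (fun s => if i.val ≤ s then A s - A (s + 1) else 0) n, hA] at h1
    have h2 : A n = 0 := by simp [A]
    rw [h2, sub_zero] at h1
    simp only [Fin.le_def]
    exact h1.symm

lemma sum_eq_count (a c : Fin n → ℝ) (hc : ∀ i, a i = ∑ s, if i ≤ s then c s else 0)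
    (P : Fin n → Fin n) :
    ∑ i ∈ univ.filter (· ≠ 0), a i * a (P i) =
      ∑ s, ∑ t, c s * c t *
        (((univ.filter (· ≠ (0 : Fin n))).filter fun i => i ≤ s ∧ P i ≤ t).card : ℝ) := by
  have h1 : ∀ i, a i * a (P i) = ∑ s, ∑ t, if i ≤ s ∧ P i ≤ t then c s * c t else 0 := by
    intro i
    rw [hc i, hc (P i), Finset.sum_mul_sum]
    refine Finset.sum_congr rfl fun s _ => Finset.sum_congr rfl fun t _ => ?_
    by_cases h1 : i ≤ s <;> by_cases h2 : P i ≤ t <;> simp [h1, h2]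
  simp_rw [h1]
  rw [Finset.sum_comm]
  refine Finset.sum_congr rfl fun s _ => ?_
  rw [Finset.sum_comm]
  refine Finset.sum_congr rfl fun t _ => ?_
  rw [← Finset.sum_filter, Finset.sum_const, nsmul_eq_mul, mul_comm]

/-- Among all parent functions for which the first `t + 1` vertices have at most
`1 + (t + 1) (d - 1)` children, `parF` maximises `∑ a i * a (P i)` for nonincreasing `a`. By the
layer-cake decomposition it suffices to compare the counts of `i ≤ s` with `P i ≤ t`. -/
lemma rearrange {d : ℕ} (hd : 2 ≤ d) (a : Fin n → ℝ) (ha : Antitone a) (h0 : ∀ i, 0 ≤ a i)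
    (P : Fin n → Fin n)
    (hP : ∀ t : Fin n, ((univ.filter (· ≠ (0 : Fin n))).filter fun i => P i ≤ t).card ≤
      1 + (t.val + 1) * (d - 1)) :
    ∑ i ∈ univ.filter (· ≠ 0), a i * a (P i) ≤
      ∑ i ∈ univ.filter (· ≠ 0), a i * a (parF d i) := by
  obtain ⟨c, hc0, hc⟩ := layer_cake a ha h0
  rw [sum_eq_count a c hc, sum_eq_count a c hc]
  refine Finset.sum_le_sum fun s _ => Finset.sum_le_sum fun t _ => ?_
  refine mul_le_mul_of_nonneg_left ?_ (mul_nonneg (hc0 s) (hc0 t))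
  rw [Nat.cast_le]
  have hle : ∀ i : Fin n, parF d i ≤ t ↔ i.val ≤ 1 + (t.val + 1) * (d - 1) := fun i =>
    par_le_iff hd i t
  by_cases hs : s.val ≤ 1 + (t.val + 1) * (d - 1)
  · refine Finset.card_le_card fun i hi => ?_
    rw [mem_filter] at hi ⊢
    refine ⟨hi.1, hi.2.1, (hle i).2 ?_⟩
    have := Fin.le_def.1 hi.2.1
    omega
  · push Not at hs
    calc _ ≤ ((univ.filter (· ≠ (0 : Fin n))).filter fun i => P i ≤ t).card :=
          Finset.card_le_card fun i hi => by
            rw [mem_filter] at hi ⊢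
            exact ⟨hi.1, hi.2.2⟩
      _ ≤ 1 + (t.val + 1) * (d - 1) := hP t
      _ = (univ.filter fun i : Fin n =>
            0 < i.val ∧ i.val ≤ 1 + (t.val + 1) * (d - 1)).card := by
          rw [card_fin_Ioc _ _ (hs.trans s.2), Nat.sub_zero]
      _ ≤ _ := Finset.card_le_card fun i hi => by
          simp only [mem_filter, mem_univ, true_and] at hi ⊢
          refine ⟨Fin.val_ne_zero_iff.1 (by omega), Fin.le_def.2 (by omega), (hle i).2 hi.2⟩

/-! ### Relabelled trees -/

section Relabel

variable {d : ℕ} {G : SimpleGraph (Fin n)} {p : Fin n → Fin n} {h : Fin n → ℕ}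
  {σ : Equiv.Perm (Fin n)}

lemma fiber_card (H : Rooted G (σ 0) p h) (j : Fin n) :
    G.degree (σ j) = (univ.filter fun i : Fin n => i ≠ 0 ∧ σ.symm (p (σ i)) = j).card +
      if j = 0 then 0 else 1 := by
  rw [H.degree]
  simp only [σ.injective.eq_iff]
  congr 1
  rw [← Finset.card_map (s := univ.filter fun i : Fin n => i ≠ 0 ∧ σ.symm (p (σ i)) = j)
    σ.toEmbedding]
  congr 1
  ext w
  simp only [mem_filter, mem_univ, true_and, mem_map, Equiv.coe_toEmbedding]
  constructor
  · rintro ⟨h1, h2⟩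
    refine ⟨σ.symm w, ⟨fun h => h1 ?_, ?_⟩, by simp⟩
    · rw [← h]
      simp
    · simp [h2]
  · rintro ⟨i, ⟨h1, h2⟩, rfl⟩
    refine ⟨fun h => h1 (σ.injective h), ?_⟩
    rw [← h2]
    simp

/-- The number of vertices whose parent is among the first `t + 1` vertices, in terms of degrees. -/
lemma count_eq (H : Rooted G (σ 0) p h) (t : Fin n) :
    ((univ.filter (· ≠ (0 : Fin n))).filter fun i => σ.symm (p (σ i)) ≤ t).card + t.val =
      ∑ j ∈ Finset.Iic t, G.degree (σ j) := by
  simp_rw [fiber_card H, Finset.sum_add_distrib]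
  congr 1
  · rw [Finset.card_eq_sum_card_fiberwise (f := fun i => σ.symm (p (σ i))) (t := Finset.Iic t)]
    · refine Finset.sum_congr rfl fun j hj => ?_
      congr 1
      ext i
      simp only [mem_filter, mem_univ, true_and]
      constructor
      · rintro ⟨⟨h1, _⟩, h2⟩
        exact ⟨h1, h2⟩
      · rintro ⟨h1, h2⟩
        exact ⟨⟨h1, h2 ▸ Finset.mem_Iic.1 hj⟩, h2⟩
    · intro i hi
      simpa using (mem_filter.1 hi).2
  · have h1 : ∀ j : Fin n, (if j = 0 then 0 else 1) = if j ≠ 0 then 1 else 0 := fun j => by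
      by_cases hj : j = 0 <;> simp [hj]
    simp_rw [h1]
    rw [← Finset.sum_filter, Finset.sum_const, smul_eq_mul, mul_one, Finset.filter_ne',
      Finset.card_erase_of_mem (by simp), Fin.card_Iic]
    simp

lemma lower_set_card (S : Finset (Fin n)) (hS : ∀ i j, i ≤ j → j ∈ S → i ∈ S) (i : Fin n) :
    i ∈ S ↔ i.val < S.card := by
  constructor
  · intro hi
    have h1 : Finset.Iic i ⊆ S := fun j hj => hS j i (Finset.mem_Iic.1 hj) hi
    have := Finset.card_le_card h1
    rw [Fin.card_Iic] at this
    omega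
  · intro hi
    by_contra hn
    have h1 : S ⊆ Finset.Iio i := fun j hj => Finset.mem_Iio.2 (by
      by_contra hle
      exact hn (hS i j (not_lt.1 hle) hj))
    have := Finset.card_le_card h1
    rw [Fin.card_Iio] at this
    omega

/-- If the interior vertices form an initial segment of the labelling, its length is the
number of interior vertices. -/
lemma interior_iff (hlow : ∀ i j, i ≤ j → IsInterior G (σ j) → IsInterior G (σ i)) (i : Fin n) :
    IsInterior G (σ i) ↔ i.val < (interiorFinset G).card := by
  have h1 : (univ.filter fun i => IsInterior G (σ i)).card = (interiorFinset G).card := by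
    rw [← Finset.card_map σ.toEmbedding]
    congr 1
    ext w
    simp only [mem_map, mem_filter, mem_univ, true_and, Equiv.coe_toEmbedding, interiorFinset]
    constructor
    · rintro ⟨i, hi, rfl⟩
      exact hi
    · intro hw
      exact ⟨σ.symm w, by simpa using hw, by simp⟩
  rw [← h1, ← lower_set_card]
  · simp
  · intro i j hij hj
    simp only [mem_filter, mem_univ, true_and] at hj ⊢
    exact hlow i j hij hj

lemma count_le (hd : 2 ≤ d) (hG : inClassSemiRegular d G) (H : Rooted G (σ 0) p h) (t : Fin n) :
    ((univ.filter (· ≠ (0 : Fin n))).filter fun i => σ.symm (p (σ i)) ≤ t).card ≤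
      1 + (t.val + 1) * (d - 1) := by
  have h1 := count_eq H t
  have h2 : ∑ j ∈ Finset.Iic t, G.degree (σ j) ≤ ∑ _j ∈ Finset.Iic t, d := by
    refine Finset.sum_le_sum fun j _ => ?_
    rcases class_bi hG (σ j) with hj | hj
    · rw [show G.degree (σ j) = 1 from hj]
      omega
    · rw [hG.2 _ hj]
  rw [Finset.sum_const, Fin.card_Iic, smul_eq_mul] at h2
  obtain ⟨e, rfl⟩ : ∃ e, d = e + 1 := ⟨d - 1, by omega⟩
  rw [mul_add] at h2
  simp only [Nat.add_sub_cancel]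
  omega

lemma nonempty_iso (H : Rooted G (σ 0) p h) (hp : ∀ i, i ≠ 0 → p (σ i) = σ (parF d i)) :
    Nonempty (bfs d n ≃g G) := by
  refine ⟨⟨σ, ?_⟩⟩
  intro u v
  rw [H.adj]
  change _ ↔ (u ≠ 0 ∧ parF d u = v) ∨ (v ≠ 0 ∧ parF d v = u)
  have h1 : ∀ u v, (σ u ≠ σ 0 ∧ p (σ u) = σ v) ↔ (u ≠ 0 ∧ parF d u = v) := by
    intro u v
    rw [σ.injective.ne_iff]
    refine and_congr_right fun hu => ?_
    rw [hp u hu, σ.injective.eq_iff]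
  rw [h1, h1]

/-- A labelling in which the parent function is nondecreasing and the interior vertices come first
identifies the tree with the breadth-first tree. -/
lemma nonempty_iso_of_mono (hd : 2 ≤ d) (hG : inClassSemiRegular d G) (H : Rooted G (σ 0) p h)
    (hlow : ∀ i j, i ≤ j → IsInterior G (σ j) → IsInterior G (σ i))
    (hmono : ∀ i j, i ≠ 0 → i < j → σ.symm (p (σ i)) ≤ σ.symm (p (σ j))) :
    Nonempty (bfs d n ≃g G) := by
  obtain ⟨hk, hn⟩ := class_card hd hG
  set k := (interiorFinset G).card with hkdef
  have hInt := interior_iff hlow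
  have hcount : ∀ t : Fin n, t.val < k →
      ((univ.filter (· ≠ (0 : Fin n))).filter fun i => σ.symm (p (σ i)) ≤ t).card =
        1 + (t.val + 1) * (d - 1) := by
    intro t ht
    have h1 := count_eq H t
    have h2 : ∑ j ∈ Finset.Iic t, G.degree (σ j) = ∑ _j ∈ Finset.Iic t, d := by
      refine Finset.sum_congr rfl fun j hj => hG.2 _ ((hInt j).2 ?_)
      have := Fin.le_def.1 (Finset.mem_Iic.1 hj)
      omega
    rw [h2, Finset.sum_const, Fin.card_Iic, smul_eq_mul] at h1
    obtain ⟨e, rfl⟩ : ∃ e, d = e + 1 := ⟨d - 1, by omega⟩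
    rw [mul_add] at h1
    simp only [Nat.add_sub_cancel]
    omega
  have hPle : ∀ i t : Fin n, i ≠ 0 → t.val < k → (σ.symm (p (σ i)) ≤ t ↔ par d i ≤ t.val) := by
    intro i t hi ht
    have h1 := lower_set_card
      (insert 0 ((univ.filter (· ≠ (0 : Fin n))).filter fun i => σ.symm (p (σ i)) ≤ t)) (by
        intro a b hab hb
        rw [mem_insert] at hb ⊢
        by_cases ha : a = 0
        · exact Or.inl ha
        · refine Or.inr ?_
          rcases hb with hb | hb
          · rw [hb] at hab
            exact absurd (Fin.ext (Nat.le_zero.1 (by simpa using Fin.le_def.1 hab))) ha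
          · rw [mem_filter] at hb ⊢
            refine ⟨by simpa using ha, ?_⟩
            rcases hab.eq_or_lt with hab | hab
            · rw [hab]
              exact hb.2
            · exact (hmono a b ha hab).trans hb.2) i
    rw [Finset.card_insert_of_notMem (by simp), hcount t ht, Nat.lt_succ_iff, ← par_le_iff hd] at h1
    rw [← h1]
    simp [hi]
  have hPk : ∀ i : Fin n, i ≠ 0 → (σ.symm (p (σ i))).val < k := by
    intro i hi
    by_cases h0 : σ.symm (p (σ i)) = 0
    · rw [h0]
      simpa using Nat.succ_le_iff.1 hk
    · refine (hInt _).1 ?_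
      have h1 := fiber_card H (σ.symm (p (σ i)))
      rw [if_neg h0] at h1
      have h2 : 0 < (univ.filter fun j : Fin n =>
          j ≠ 0 ∧ σ.symm (p (σ j)) = σ.symm (p (σ i))).card :=
        Finset.card_pos.2 ⟨i, by simp [hi]⟩
      unfold IsInterior
      omega
  refine nonempty_iso H fun i hi => ?_
  rw [← Equiv.symm_apply_eq]
  have h1 := (hPle i _ hi (hPk i hi)).1 le_rfl
  have h2 := (hPle i (parF d i) hi (par_lt_of_card hd hk hn i)).2 le_rfl
  exact le_antisymm h2 (Fin.le_def.2 h1)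

end Relabel

/-! ### SLO*-trees are breadth-first trees -/

/-- The labelling of the vertices by their position in a strict total order. -/
lemma exists_labelling (lt : Fin n → Fin n → Prop) (hlt : IsStrictTotalOrder (Fin n) lt) :
    ∃ σ : Equiv.Perm (Fin n), ∀ i j, lt (σ i) (σ j) ↔ i < j := by
  let τ : Fin n → Fin n := fun v => ⟨(univ.filter fun w => lt w v).card, by
    have h1 : (univ.filter fun w => lt w v) ⊂ (univ : Finset (Fin n)) := by
      rw [Finset.filter_ssubset]
      exact ⟨v, mem_univ v, irrefl_of lt v⟩
    have := Finset.card_lt_card h1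
    simpa using this⟩
  have hmono : ∀ v w, lt v w → τ v < τ w := by
    intro v w hvw
    change (univ.filter fun x => lt x v).card < (univ.filter fun x => lt x w).card
    refine Finset.card_lt_card ?_
    refine Finset.ssubset_iff_subset_ne.2 ⟨fun x hx => ?_, fun he => ?_⟩
    · simp only [mem_filter, mem_univ, true_and] at hx ⊢
      exact trans_of lt hx hvw
    · have : v ∈ univ.filter fun x => lt x w := by simpa using hvw
      rw [← he] at this
      exact irrefl_of lt v (by simpa using this)
  have hiff : ∀ v w, lt v w ↔ τ v < τ w := by
    intro v w
    refine ⟨hmono v w, fun h => ?_⟩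
    rcases trichotomous_of lt v w with h1 | h1 | h1
    · exact h1
    · rw [h1] at h
      exact absurd h (lt_irrefl _)
    · exact absurd (hmono w v h1) (not_lt.2 h.le)
  have hinj : Function.Injective τ := by
    intro v w hvw
    rcases trichotomous_of lt v w with h1 | h1 | h1
    · exact absurd (hmono _ _ h1) (by rw [hvw]; exact lt_irrefl _)
    · exact h1
    · exact absurd (hmono _ _ h1) (by rw [hvw]; exact lt_irrefl _)
  let e : Equiv.Perm (Fin n) := Equiv.ofBijective τ (Finite.injective_iff_bijective.1 hinj)
  refine ⟨e.symm, fun i j => ?_⟩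
  rw [hiff]
  change e (e.symm i) < e (e.symm j) ↔ _
  simp

lemma iso_of_slo {d : ℕ} (hd : 2 ≤ d) {G : SimpleGraph (Fin n)} (hG : inClassSemiRegular d G)
    (hS : IsSLOStarTree G) : Nonempty (bfs d n ≃g G) := by
  obtain ⟨_, v₀, lt, ⟨hlt, S1, S2, S3⟩, _⟩ := hS
  obtain ⟨σ, hσ⟩ := exists_labelling lt hlt
  have hroot : σ 0 = v₀ := by
    by_contra hne
    have h1 : lt (σ 0) v₀ := by
      rw [← σ.apply_symm_apply v₀, hσ]
      refine Fin.pos_iff_ne_zero.2 fun h => hne ?_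
      rw [← h]
      simp
    have h2 := S1 _ _ h1
    rw [SimpleGraph.dist_self] at h2
    exact hne (hG.1.1.connected.dist_eq_zero_iff.1 (Nat.le_zero.1 h2)).symm
  subst hroot
  obtain ⟨p, H⟩ := exists_rooted hG.1.1 (σ 0)
  refine nonempty_iso_of_mono hd hG H ?_ ?_
  · intro i j hij hj
    rcases class_bi hG (σ i) with hi | hi
    · rcases hij.eq_or_lt with h | h
      · rw [h]
        exact hj
      · have h1 : G.degree (σ j) = 1 := S3 _ _ ((hσ i j).2 h) hi
        unfold IsInterior at hj
        omega
    · exact hi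
  · intro i j hi hij
    by_contra hlt'
    push Not at hlt'
    rw [← hσ, σ.apply_symm_apply, σ.apply_symm_apply] at hlt'
    have hj : j ≠ 0 := by
      rintro rfl
      exact absurd (Fin.lt_def.1 hij) (by simp)
    have h1 := S2 _ _ (σ j) (σ i) hlt'
      ((H.isChild_iff _ _).2 ⟨σ.injective.ne hj, rfl⟩)
      ((H.isChild_iff _ _).2 ⟨σ.injective.ne hi, rfl⟩)
    rw [hσ] at h1
    exact absurd h1 (not_lt.2 hij.le)

lemma rooted_of_iso {d : ℕ} {G : SimpleGraph (Fin n)} (e : bfs d n ≃g G) :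
    Rooted G (e 0) (fun v => e (parF d (e.symm v))) (fun v => (e.symm v).val) := by
  constructor
  · intro u v
    rw [← e.symm.map_adj_iff, (bfs_rooted d).adj]
    have h1 : ∀ u : Fin n, e.symm u ≠ 0 ↔ u ≠ e 0 := fun u => by
      rw [not_iff_not]
      exact e.toEquiv.symm_apply_eq
    have h2 : ∀ u v : Fin n, parF d (e.symm u) = e.symm v ↔ e (parF d (e.symm u)) = v := fun u v =>
      e.toEquiv.eq_symm_apply
    rw [h1, h1, h2, h2]
  · intro v hv
    have h1 : e.symm v ≠ 0 := fun h => hv (by rw [← h]; simp)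
    simpa using (bfs_rooted d).lt _ h1

lemma slo_of_iso {d : ℕ} (hd : 2 ≤ d) {G : SimpleGraph (Fin n)} (hG : inClassSemiRegular d G)
    (e : bfs d n ≃g G) : IsSLOStarTree G := by
  obtain ⟨hk, hn⟩ := class_card hd hG
  have H := rooted_of_iso e
  refine ⟨hG.1, e 0, fun u v => e.symm u < e.symm v, ⟨?_, ?_, ?_, ?_⟩, ?_⟩
  · exact { trichotomous := fun a b h1 h2 => e.symm.injective (le_antisymm (not_lt.1 h2) (not_lt.1 h1))
            irrefl := fun a => lt_irrefl _
            trans := fun a b c => lt_trans }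
  · have key : ∀ m (v w : Fin n), (e.symm w).val ≤ m → e.symm v ≤ e.symm w →
        G.dist (e 0) v ≤ G.dist (e 0) w := by
      intro m
      induction m with
      | zero =>
        intro v w hm hvw
        have h1 : v = w := e.symm.injective (by
          apply Fin.ext
          have := Fin.le_def.1 hvw
          omega)
        rw [h1]
      | succ m ih =>
        intro v w hm hvw
        by_cases hv : v = e 0
        · rw [hv, SimpleGraph.dist_self]
          exact Nat.zero_le _
        · have hw : w ≠ e 0 := by
            rintro rfl
            apply hv
            have : e.symm v = 0 := by simpa using hvw
            rw [← this]
            simp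
          rw [H.dist v hv, H.dist w hw]
          refine Nat.succ_le_succ (ih _ _ ?_ ?_)
          · have := H.lt w hw
            omega
          · simpa using Fin.le_def.2 (par_mono d (Fin.le_def.1 hvw))
    exact fun v w h => key _ v w le_rfl h.le
  · intro v₁ v₂ w₁ w₂ hv h1 h2
    rw [H.isChild_iff] at h1 h2
    by_contra hle
    have h3 := par_mono d (Fin.le_def.1 (not_lt.1 hle))
    rw [← h1.2, ← h2.2] at hv
    simp only [RelIso.symm_apply_apply] at hv
    have := Fin.lt_def.1 hv
    exact absurd h3 (not_le.2 this)
  · intro v w hvw hv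
    have hdeg : ∀ u, G.degree u = if (e.symm u).val < (interiorFinset G).card then d else 1 := by
      intro u
      rw [← bfs_degree hd hk hn, ← e.symm.degree_eq u]
    unfold IsBoundary at hv ⊢
    rw [hdeg] at hv ⊢
    have := Fin.lt_def.1 hvw
    split_ifs at hv ⊢ <;> omega
  · intro v w _ hv hw
    rw [hG.2 v hv, hG.2 w hw]

lemma eigenpair_iso {G K : SimpleGraph (Fin n)} (e : G ≃g K) {μ : ℝ} {f : Fin n → ℝ}
    (hf : IsDirichletEigenpair K μ f) : IsDirichletEigenpair G μ (f ∘ e) := by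
  obtain ⟨h0, hb, he⟩ := hf
  have hdeg : ∀ v, K.degree (e v) = G.degree v := fun v => e.degree_eq v
  refine ⟨fun h => h0 (funext fun v => ?_), fun v hv => hb _ ?_, fun v hv => ?_⟩
  · have := congrFun h (e.symm v)
    simpa using this
  · unfold IsBoundary at hv ⊢
    rw [hdeg, hv]
  · have h1 := he (e v) (by unfold IsInterior at hv ⊢; rw [hdeg]; exact hv)
    rw [Function.comp_apply, ← h1, lapApply, lapApply, hdeg, sum_neighbor_eq, sum_neighbor_eq,
      ← e.toEquiv.sum_comp (fun w => if K.Adj (e v) w then f w else 0)]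
    congr 1
    refine Finset.sum_congr rfl fun w _ => ?_
    have : K.Adj (e v) (e w) ↔ G.Adj v w := e.map_adj_iff
    simp [this]

lemma lambda_iso {G K : SimpleGraph (Fin n)} (e : G ≃g K) :
    dirichletLambda G = dirichletLambda K := by
  unfold dirichletLambda
  congr 1
  ext μ
  exact ⟨fun ⟨_, hf⟩ => ⟨_, eigenpair_iso e.symm hf⟩, fun ⟨_, hf⟩ => ⟨_, eigenpair_iso e hf⟩⟩

/-! ### Comparison with the breadth-first tree and the equality case -/

section Compare

variable {d : ℕ} {G : SimpleGraph (Fin n)} {f : Fin n → ℝ} {σ : Equiv.Perm (Fin n)}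

lemma interior_iff_of_antitone (hG : inClassSemiRegular d G)
    (hf : IsDirichletEigenpair G (dirichletLambda G) f) (h0 : ∀ v, 0 ≤ f v)
    (hσ : Antitone (f ∘ σ)) (i : Fin n) :
    IsInterior G (σ i) ↔ i.val < (interiorFinset G).card := by
  refine interior_iff (fun i j hij hj => ?_) i
  rcases class_bi hG (σ i) with hi | hi
  · have h1 := eigen_pos G hG.1.1.connected (class_bi hG) hf h0 _ hj
    have h2 := hσ hij
    have h3 := hf.2.1 _ hi
    simp only [Function.comp_apply] at h2
    linarith
  · exact hi

/-- Transplanting a nonnegative first eigenfunction of `G`, sorted in nonincreasing order, to the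
breadth-first tree does not increase its Rayleigh quotient. -/
lemma compare (hd : 2 ≤ d) (hG : inClassSemiRegular d G)
    (hf : IsDirichletEigenpair G (dirichletLambda G) f) (h0 : ∀ v, 0 ≤ f v)
    (hσ : Antitone (f ∘ σ)) :
    IsDirichlet (bfs d n) (f ∘ σ) ∧
      qf (bfs d n) (f ∘ σ) ≤ dirichletLambda G * ∑ i, (f ∘ σ) i ^ 2 := by
  obtain ⟨hk, hn⟩ := class_card hd hG
  have hInt := interior_iff_of_antitone hG hf h0 hσ
  have hD : IsDirichlet (bfs d n) (f ∘ σ) := by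
    intro i hi
    refine hf.2.1 _ ((class_bi hG (σ i)).resolve_right fun h => ?_)
    rw [hInt, ← bfs_interior hd hk hn] at h
    unfold IsBoundary at hi
    unfold IsInterior at h
    omega
  refine ⟨hD, ?_⟩
  obtain ⟨p, H⟩ := exists_rooted hG.1.1 (σ 0)
  have hqG : qf G f = dirichletLambda G * ∑ i, (f ∘ σ) i ^ 2 := by
    rw [show ∑ i, (f ∘ σ) i ^ 2 = ∑ v, f v ^ 2 from Equiv.sum_comp σ (fun v => f v ^ 2),
      qf, Finset.mul_sum]
    refine Finset.sum_congr rfl fun v _ => ?_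
    rcases class_bi hG v with hv | hv
    · simp [hf.2.1 v hv]
    · rw [hf.2.2 v hv]
      ring
  rw [← hqG, class_qf hG H f hf.2.1, class_qf (bfs_inClass hd hk hn) (bfs_rooted d) _ hD]
  have h1 : ∑ i, (f ∘ σ) i ^ 2 = ∑ v, f v ^ 2 := Equiv.sum_comp σ (fun v => f v ^ 2)
  have h2 : ∑ w ∈ univ.filter (· ≠ σ 0), f w * f (p w) =
      ∑ i ∈ univ.filter (· ≠ 0), (f ∘ σ) i * (f ∘ σ) (σ.symm (p (σ i))) := by
    rw [Finset.sum_filter, Finset.sum_filter,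
      ← Equiv.sum_comp σ (fun w => if w ≠ σ 0 then f w * f (p w) else 0)]
    refine Finset.sum_congr rfl fun i _ => ?_
    simp [σ.injective.eq_iff]
  have h3 := rearrange hd (f ∘ σ) hσ (fun i => h0 _) (fun i => σ.symm (p (σ i)))
    (count_le hd hG H)
  rw [h1, h2]
  linarith

lemma exists_sorting (f : Fin n → ℝ) : ∃ σ : Equiv.Perm (Fin n), Antitone (f ∘ σ) := by
  refine ⟨Tuple.sort (fun i => - f i), fun i j hij => ?_⟩
  have := Tuple.monotone_sort (fun i => - f i) hij
  simp only [Function.comp_apply] at this ⊢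
  linarith

lemma fk_le (hd : 2 ≤ d) (hG : inClassSemiRegular d G) :
    dirichletLambda (bfs d n) ≤ dirichletLambda G := by
  obtain ⟨hk, hn⟩ := class_card hd hG
  obtain ⟨⟨f, hf, h0⟩, -, -⟩ := spectral G (class_bi hG) hG.1.2.1
  obtain ⟨σ, hσ⟩ := exists_sorting f
  obtain ⟨hD, hle⟩ := compare hd hG hf h0 hσ
  have hB := bfs_inClass hd hk hn
  have h1 := (spectral (bfs d n) (class_bi hB) hB.1.2.1).2.1 _ hD
  have hpos : 0 < ∑ i, (f ∘ σ) i ^ 2 := by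
    obtain ⟨v, hv⟩ := hG.1.2.1
    have := eigen_pos G hG.1.1.connected (class_bi hG) hf h0 v hv
    refine Finset.sum_pos' (fun _ _ => sq_nonneg _) ⟨σ.symm v, mem_univ _, ?_⟩
    simp only [Function.comp_apply, σ.apply_symm_apply]
    positivity
  exact le_of_mul_le_mul_right (h1.trans hle) hpos

/-- In the equality case a sorted first eigenfunction solves the eigenvalue equation on both trees,
so the sums over neighbourhoods agree. -/
lemma neighbor_sum_eq (hd : 2 ≤ d) (hG : inClassSemiRegular d G)
    (hle : dirichletLambda G ≤ dirichletLambda (bfs d n))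
    (hf : IsDirichletEigenpair G (dirichletLambda G) f) (h0 : ∀ v, 0 ≤ f v)
    (hσ : Antitone (f ∘ σ)) (i : Fin n) (hi : i.val < (interiorFinset G).card) :
    ∑ w ∈ G.neighborFinset (σ i), f w = ∑ w ∈ (bfs d n).neighborFinset i, f (σ w) := by
  obtain ⟨hk, hn⟩ := class_card hd hG
  have heq := le_antisymm hle (fk_le hd hG)
  obtain ⟨hD, hq⟩ := compare hd hG hf h0 hσ
  have hB := bfs_inClass hd hk hn
  obtain ⟨-, h1, h2⟩ := spectral (bfs d n) (class_bi hB) hB.1.2.1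
  have hiB := (bfs_interior hd hk hn i).2 hi
  have hiG := (interior_iff_of_antitone hG hf h0 hσ i).2 hi
  rw [heq] at hq
  have h3 := h2 _ hD (le_antisymm hq (h1 _ hD)) i hiB
  have h4 := hf.2.2 _ hiG
  rw [lapApply, hG.2 _ hiG] at h4
  rw [lapApply, hB.2 _ hiB, ← heq] at h3
  simp only [Function.comp_apply] at h3
  linarith

/-- Two sets of equal size on which an antitone `a` has equal sums: if `C \ D` lies entirely before
`D \ C`, then every value of `a` on `C \ D` is also attained on `D \ C`. -/
lemma exists_eq_of_sum_eq (a : Fin n → ℝ) (ha : Antitone a) (C D : Finset (Fin n))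
    (hcard : C.card = D.card) (hsum : ∑ i ∈ C, a i = ∑ i ∈ D, a i)
    (hlt : ∀ c ∈ C \ D, ∀ x ∈ D \ C, c < x) (j : Fin n) (hj : j ∈ C \ D) :
    ∃ x ∈ D \ C, a x = a j := by
  have hc : (C \ D).card = (D \ C).card := by
    have h1 := Finset.card_sdiff_add_card_inter C D
    have h2 := Finset.card_sdiff_add_card_inter D C
    rw [Finset.inter_comm] at h2
    omega
  have hs : ∑ i ∈ C \ D, a i = ∑ i ∈ D \ C, a i := by
    have h1 := Finset.sum_inter_add_sum_sdiff C D a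
    have h2 := Finset.sum_inter_add_sum_sdiff D C a
    rw [Finset.inter_comm] at h2
    linarith
  have hne : (D \ C).Nonempty := by
    rw [← Finset.card_pos, ← hc]
    exact Finset.card_pos.2 ⟨j, hj⟩
  obtain ⟨x, hx, hmax⟩ := Finset.exists_max_image (D \ C) a hne
  refine ⟨x, hx, ?_⟩
  by_contra hxj
  have h1 : ∑ i ∈ D \ C, a i ≤ ∑ _i ∈ D \ C, a x := Finset.sum_le_sum hmax
  have h2 : ∑ _i ∈ C \ D, a x < ∑ i ∈ C \ D, a i :=
    Finset.sum_lt_sum (fun i hi => ha (hlt i hi x hx).le)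
      ⟨j, hj, lt_of_le_of_ne (ha (hlt j hj x hx).le) hxj⟩
  rw [Finset.sum_const] at h1 h2
  rw [hc] at h2
  linarith

/-- The equality case. A sorting of the eigenfunction is improved step by step: if the parents of
the first `j` vertices are as in the breadth-first tree, equality of the neighbourhood sums at the
vertex `q = parF d j` yields a child of `q` with the same value as the vertex at position `j`, and
exchanging the two extends the agreement without spoiling the sorting. -/
lemma iso_of_lambda_le (hd : 2 ≤ d) (hG : inClassSemiRegular d G)
    (hle : dirichletLambda G ≤ dirichletLambda (bfs d n)) : Nonempty (bfs d n ≃g G) := by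
  obtain ⟨hk, hn⟩ := class_card hd hG
  obtain ⟨⟨f, hf, h0⟩, -, -⟩ := spectral G (class_bi hG) hG.1.2.1
  obtain ⟨σ₀, hσ₀⟩ := exists_sorting f
  obtain ⟨p, H⟩ := exists_rooted hG.1.1 (σ₀ 0)
  have key : ∀ m : ℕ, m ≤ n → ∃ σ : Equiv.Perm (Fin n), Antitone (f ∘ σ) ∧ σ 0 = σ₀ 0 ∧
      ∀ i : Fin n, i ≠ 0 → i.val < m → p (σ i) = σ (parF d i) := by
    intro m
    induction m with
    | zero => exact fun _ => ⟨σ₀, hσ₀, rfl, fun i _ hi => absurd hi (Nat.not_lt_zero _)⟩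
    | succ m ih =>
      intro hm
      obtain ⟨σ, hσ, hr, hagree⟩ := ih (by omega)
      let j : Fin n := ⟨m, hm⟩
      by_cases hj0 : j = 0
      · refine ⟨σ, hσ, hr, fun i hi him => absurd ?_ hi⟩
        have h1 : m = 0 := by simpa [j] using congrArg Fin.val hj0
        apply Fin.ext
        simp only [Fin.val_zero]
        omega
      by_cases hpj : p (σ j) = σ (parF d j)
      · refine ⟨σ, hσ, hr, fun i hi him => ?_⟩
        rcases Nat.lt_succ_iff_lt_or_eq.1 him with h1 | h1
        · exact hagree i hi h1
        · rw [show i = j from Fin.ext h1]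
          exact hpj
      have Hσ : Rooted G (σ 0) p (G.dist (σ₀ 0)) := hr ▸ H
      let q : Fin n := parF d j
      have hqj : q < j := Fin.lt_def.2 (par_lt d (Fin.val_ne_zero_iff.2 hj0))
      have hqk : q.val < (interiorFinset G).card := par_lt_of_card hd hk hn j
      let C : Finset (Fin n) := univ.filter fun i => i ≠ 0 ∧ parF d i = q
      let D : Finset (Fin n) := univ.filter fun i => i ≠ 0 ∧ σ.symm (p (σ i)) = q
      have hcard : C.card = D.card := by
        have h1 := fiber_card Hσ q
        have h2 := (bfs_rooted d).degree q
        rw [(bfs_inClass hd hk hn).2 q ((bfs_interior hd hk hn q).2 hqk)] at h2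
        rw [hG.2 _ ((interior_iff_of_antitone hG hf h0 hσ q).2 hqk)] at h1
        change d = D.card + _ at h1
        change d = C.card + _ at h2
        omega
      have hsum : ∑ i ∈ C, (f ∘ σ) i = ∑ i ∈ D, (f ∘ σ) i := by
        have h1 := neighbor_sum_eq hd hG hle hf h0 hσ q hqk
        rw [Hσ.sum_neighbor, (bfs_rooted d).sum_neighbor] at h1
        have h2 : (if σ q = σ 0 then 0 else f (p (σ q))) =
            if q = 0 then 0 else f (σ (parF d q)) := by
          by_cases hq0 : q = 0
          · simp [hq0]
          · rw [if_neg (σ.injective.ne hq0), if_neg hq0, hagree q hq0 (Fin.lt_def.1 hqj)]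
        rw [h2] at h1
        have h3 := add_right_cancel h1
        have h4 : ∑ w ∈ univ.filter (fun w => w ≠ σ 0 ∧ p w = σ q), f w =
            ∑ i ∈ D, (f ∘ σ) i := by
          rw [Finset.sum_filter, Finset.sum_filter,
            ← Equiv.sum_comp σ (fun w => if w ≠ σ 0 ∧ p w = σ q then f w else 0)]
          refine Finset.sum_congr rfl fun i _ => ?_
          simp only [σ.injective.ne_iff, Equiv.symm_apply_eq, Function.comp_apply]
        rw [← h4, h3]
        rfl
      have hsame : ∀ i : Fin n, i < j → (i ∈ C ↔ i ∈ D) := by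
        intro i hij
        simp only [C, D, mem_filter, mem_univ, true_and]
        refine and_congr_right fun hi => ?_
        rw [hagree i hi (Fin.lt_def.1 hij), σ.symm_apply_apply]
      have hlt : ∀ c ∈ C \ D, ∀ x ∈ D \ C, c < x := by
        intro c hc x hx
        rw [mem_sdiff] at hc hx
        have hxj : j ≤ x := by
          by_contra h
          exact hx.2 ((hsame x (not_le.1 h)).2 hx.1)
        have hx0 : x ≠ 0 := (mem_filter.1 hx.1).2.1
        have hcq : par d c = q.val := congrArg Fin.val (mem_filter.1 hc.1).2.2
        by_contra h
        have h1 := par_mono d (Fin.le_def.1 (not_lt.1 h))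
        have h2 : q.val ≤ par d x := par_mono d (Fin.le_def.1 hxj)
        exact hx.2 (mem_filter.2 ⟨mem_univ _, hx0, Fin.ext (show par d x = q.val by omega)⟩)
      have hjC : j ∈ C \ D := by
        rw [mem_sdiff]
        refine ⟨mem_filter.2 ⟨mem_univ _, hj0, rfl⟩, fun h => hpj ?_⟩
        exact (Equiv.symm_apply_eq _).1 (mem_filter.1 h).2.2
      obtain ⟨x, hx, hax⟩ := exists_eq_of_sum_eq (f ∘ σ) hσ C D hcard hsum hlt j hjC
      have hjx : j < x := hlt j hjC x hx
      have hlow : ∀ i : Fin n, i < j → Equiv.swap j x i = i := fun i hi =>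
        Equiv.swap_apply_of_ne_of_ne hi.ne (hi.trans hjx).ne
      refine ⟨(Equiv.swap j x).trans σ, ?_, ?_, ?_⟩
      · have : f ∘ ((Equiv.swap j x).trans σ) = f ∘ σ := by
          funext i
          simp only [Function.comp_apply, Equiv.trans_apply] at hax ⊢
          rcases eq_or_ne i j with rfl | h1
          · rw [Equiv.swap_apply_left, hax]
          · rcases eq_or_ne i x with rfl | h2
            · rw [Equiv.swap_apply_right, hax]
            · rw [Equiv.swap_apply_of_ne_of_ne h1 h2]
        rw [this]
        exact hσ
      · rw [Equiv.trans_apply, hlow 0 (Fin.pos_iff_ne_zero.2 hj0), hr]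
      · intro i hi him
        have hpi : parF d i < i := Fin.lt_def.2 (par_lt d (Fin.val_ne_zero_iff.2 hi))
        have hij : i ≤ j := Fin.le_def.2 (Nat.lt_succ_iff.1 him)
        rw [Equiv.trans_apply, Equiv.trans_apply, hlow _ (hpi.trans_le hij)]
        rcases hij.eq_or_lt with h1 | h1
        · rw [h1, Equiv.swap_apply_left]
          exact (Equiv.symm_apply_eq _).1 (mem_filter.1 (mem_sdiff.1 hx).1).2.2
        · rw [hlow i h1]
          exact hagree i hi (Fin.lt_def.1 h1)
  obtain ⟨σ, -, hr, hp⟩ := key n le_rfl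
  have Hσ : Rooted G (σ 0) p (G.dist (σ₀ 0)) := hr ▸ H
  exact nonempty_iso Hσ fun i hi => hp i hi i.2

lemma fk_iff_iso (hd : 2 ≤ d) (hG : inClassSemiRegular d G) :
    hasFKSemiRegular d G ↔ Nonempty (bfs d n ≃g G) := by
  obtain ⟨hk, hn⟩ := class_card hd hG
  constructor
  · exact fun h => iso_of_lambda_le hd hG (h.2 _ (bfs_inClass hd hk hn))
  · rintro ⟨e⟩
    refine ⟨hG, fun G' hG' => ?_⟩
    rw [← lambda_iso e]
    exact fk_le hd hG'

end Compare

end BreadthFirst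

/-- **Corollary (Pruss).** In the class of semi-`d`-regular trees with boundary
with `n` vertices, a tree `G` has the Faber-Krahn property if and only if it is
an SLO*-tree; `G` is then uniquely determined up to isomorphism. -/
theorem faberKrahn_semiRegular (n d : ℕ) (hd : 2 ≤ d)
    (G : SimpleGraph (Fin n)) (hG : inClassSemiRegular d G) :
    (hasFKSemiRegular d G ↔ IsSLOStarTree G) ∧
    (hasFKSemiRegular d G → ∀ G' : SimpleGraph (Fin n), hasFKSemiRegular d G' →
        Nonempty (G ≃g G')) := by
  have : NeZero n := by
    obtain ⟨v, -⟩ := hG.1.2.1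
    exact ⟨fun h => (Fin.cast h v).elim0⟩
  refine ⟨(fk_iff_iso hd hG).trans ⟨fun ⟨e⟩ => slo_of_iso hd hG e, iso_of_slo hd hG⟩, ?_⟩
  intro h G' h'
  obtain ⟨e⟩ := (fk_iff_iso hd hG).1 h
  obtain ⟨e'⟩ := (fk_iff_iso hd h'.1).1 h'
  exact ⟨e.symm.trans e'⟩

end FK
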